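/- Tail bound for the normalized log-value at 1: let X_n = (1/n²) log((ξ_0 + ξ_1 + … + ξ_n)/ξ_n). Then for every B > 0 there exists n_0 such that for all n ≥ n_0, P(|X_n| > B) ≤ 20 n e^{−B n²}; moreover P(X_n ≤ −1) = 0 for all n sufficiently large. -/

import Mathlib

/-!
Put `S = ξ₀ + … + ξ_{n-1}` and `K = exp (B n²)`. As all `ξ_j` are positive, `X_n ≥ 0`, and
`B ≤ X_n` says that `(K - 1) ξ_n ≤ S`. Since `ξ_n` is independent of `S`, conditioning on `S` gives
this event the probability `1 - 𝔼 exp (-S / (K - 1))`, where the Laplace transform of a sum of `n`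
independent exponential variables makes the expectation equal to `(1 - 1 / K) ^ n`. Bernoulli's
inequality bounds the resulting probability by `n / K`.
-/

open MeasureTheory ProbabilityTheory Filter Polynomial
open scoped ENNReal NNReal Classical

noncomputable section

/-- Polynomials of positive degree with all coefficients real and strictly positive. -/
def polPos (p : Polynomial ℂ) : Prop :=
  0 < p.natDegree ∧ ∀ i ≤ p.natDegree, (p.coeff i).im = 0 ∧ 0 < (p.coeff i).re

/-- Empirical measure of the zeros of a polynomial (counted with multiplicity). -/
def zeroMeasure (p : Polynomial ℂ) : Measure ℂ :=
  (p.natDegree : ℝ≥0∞)⁻¹ • (p.roots.map MeasureTheory.Measure.dirac).sum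

/-- The closure of the set of empirical zero measures of polynomials with positive
coefficients, inside the space of probability measures with the weak topology. -/
def calP : Set (ProbabilityMeasure ℂ) :=
  closure {μ : ProbabilityMeasure ℂ |
    ∃ p : Polynomial ℂ, polPos p ∧ (μ : Measure ℂ) = zeroMeasure p}

/-- The kernel f(z,w) = log|1-z| + log|1-w| - log|z-w|. -/
def fker (z w : ℂ) : ℝ :=
  Real.log ‖1 - z‖ + Real.log ‖1 - w‖
    - Real.log ‖z - w‖

/-- The double integral ∬ f dμ dμ, as an extended real number: the (Lebesgue)
integral of the positive part minus that of the negative part. -/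
def doubleInt (μ : Measure ℂ) : EReal :=
  ((∫⁻ q : ℂ × ℂ, ENNReal.ofReal (fker q.1 q.2) ∂(μ.prod μ) : ℝ≥0∞) : EReal)
    - ((∫⁻ q : ℂ × ℂ, ENNReal.ofReal (-(fker q.1 q.2)) ∂(μ.prod μ) : ℝ≥0∞) : EReal)

/-- The large deviations rate function. -/
def rateI (μ : ProbabilityMeasure ℂ) : EReal :=
  if μ ∈ calP then (2 : EReal)⁻¹ * doubleInt (μ : Measure ℂ) else ⊤

end

lemma one_sub_one_sub_pow_le {x : ℝ} (hx : x ≤ 2) (n : ℕ) : 1 - (1 - x) ^ n ≤ n * x := by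
  linarith [one_add_mul_sub_le_pow (show -1 ≤ 1 - x by linarith) n]

lemma expMeasure_Iic {r x : ℝ} (hr : 0 < r) (hx : 0 ≤ x) :
    expMeasure r (Set.Iic x) = ENNReal.ofReal (1 - Real.exp (-(r * x))) := by
  have := isProbabilityMeasure_expMeasure hr
  rw [← ofReal_cdf, cdf_expMeasure_eq hr, if_pos hx]

lemma ae_pos_expMeasure {r : ℝ} (hr : 0 < r) : ∀ᵐ x ∂expMeasure r, 0 < x := by
  have h_null : expMeasure r (Set.Iic 0) = 0 := by simp [expMeasure_Iic hr le_rfl]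
  simpa using measure_eq_zero_iff_ae_notMem.mp h_null

lemma integral_expMeasure {r : ℝ} (hr : 0 < r) (f : ℝ → ℝ) :
    ∫ x, f x ∂expMeasure r = ∫ x in Set.Ioi 0, r * Real.exp (-(r * x)) * f x := by
  have h_lt_top : ∀ᵐ x, exponentialPDF r x < ∞ := ae_of_all _ fun _ ↦ ENNReal.ofReal_lt_top
  have h_meas : Measurable (exponentialPDF r) := by unfold exponentialPDF; fun_prop
  have h_density : expMeasure r = volume.withDensity (exponentialPDF r) := rfl
  rw [h_density, integral_withDensity_eq_integral_toReal_smul h_meas h_lt_top,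
    ← integral_Ici_eq_integral_Ioi, ← integral_indicator measurableSet_Ici]
  congr with x
  rcases lt_or_ge x 0 with hx | hx
  · simp [exponentialPDF_of_neg hx, hx]
  · have : 0 ≤ r * Real.exp (-(r * x)) := by positivity
    simp [exponentialPDF_of_nonneg hx, hx, this]

lemma mgf_id_expMeasure {r t : ℝ} (hr : 0 < r) (ht : t < r) :
    mgf id (expMeasure r) t = r / (r - t) := by
  have h_exp (x : ℝ) : r * Real.exp (-(r * x)) * Real.exp (t * x) = r * Real.exp ((t - r) * x) := by
    rw [mul_assoc, ← Real.exp_add]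
    ring_nf
  simp only [mgf, id_eq, integral_expMeasure hr, h_exp]
  rw [integral_const_mul, integral_exp_mul_Ioi (sub_neg.mpr ht), mul_zero, Real.exp_zero,
    ← neg_sub r t, neg_div_neg_eq, mul_one_div]

section

variable {Ω : Type*} [MeasurableSpace Ω] {P : Measure Ω} {r : ℝ}

lemma ae_pos_of_hasLaw_expMeasure {X : Ω → ℝ} (hr : 0 < r) (hX : HasLaw X (expMeasure r) P) :
    ∀ᵐ ω ∂P, 0 < X ω :=
  (hX.ae_iff (by fun_prop)).mpr (ae_pos_expMeasure hr)

lemma mgf_of_hasLaw_expMeasure {X : Ω → ℝ} {t : ℝ} (hr : 0 < r) (ht : t < r)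
    (hX : HasLaw X (expMeasure r) P) : mgf X P t = r / (r - t) := by
  rw [← mgf_id_map hX.aemeasurable, hX.map_eq, mgf_id_expMeasure hr ht]

lemma measure_prodMk_mem_eq_lintegral_of_indepFun {α β : Type*} [MeasurableSpace α]
    [MeasurableSpace β] [IsFiniteMeasure P] {X : Ω → α} {Y : Ω → β} {μ : Measure β}
    {s : Set (α × β)} (hX : AEMeasurable X P) (hY : HasLaw Y μ P) (hXY : IndepFun X Y P)
    (hs : MeasurableSet s) :
    P {ω | (X ω, Y ω) ∈ s} = ∫⁻ ω, μ (Prod.mk (X ω) ⁻¹' s) ∂P := by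
  have : SFinite μ := hY.map_eq ▸ inferInstance
  calc P {ω | (X ω, Y ω) ∈ s}
      = P.map (fun ω ↦ (X ω, Y ω)) s :=
        (Measure.map_apply_of_aemeasurable (hX.prodMk hY.aemeasurable) hs).symm
    _ = ((P.map X).prod μ) s := by
        rw [hXY.map_prod_eq_prod_map_map hX hY.aemeasurable, hY.map_eq]
    _ = ∫⁻ ω, μ (Prod.mk (X ω) ⁻¹' s) ∂P := by
        rw [Measure.prod_apply hs,
          lintegral_map' (measurable_measure_prodMk_left hs).aemeasurable hX]

lemma measure_mul_le_eq_one_sub_mgf {X Y : Ω → ℝ} {c : ℝ} (hr : 0 < r) (hc : 0 < c)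
    (hX : AEMeasurable X P) (hX₀ : ∀ᵐ ω ∂P, 0 ≤ X ω) (hY : HasLaw Y (expMeasure r) P)
    (hXY : IndepFun X Y P) :
    P {ω | c * Y ω ≤ X ω} = ENNReal.ofReal (1 - mgf X P (-(r / c))) := by
  have := isProbabilityMeasure_expMeasure hr
  have := hY.isProbabilityMeasure
  have h_int : Integrable (fun ω ↦ Real.exp (-(r / c) * X ω)) P := by
    have h_neg : ∀ᵐ ω ∂P, (-X) ω ≤ 0 := by simpa using hX₀
    simpa using integrable_exp_mul_of_le (r / c) 0 (div_pos hr hc).le hX.neg h_neg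
  have h_meas : MeasurableSet {q : ℝ × ℝ | c * q.2 ≤ q.1} :=
    measurableSet_le (by fun_prop) (by fun_prop)
  have h_section (x : ℝ) : Prod.mk x ⁻¹' {q : ℝ × ℝ | c * q.2 ≤ q.1} = Set.Iic (x / c) := by
    ext y
    simp [le_div_iff₀' hc]
  calc P {ω | c * Y ω ≤ X ω}
      = ∫⁻ ω, expMeasure r (Set.Iic (X ω / c)) ∂P := by
        simpa only [h_section, Set.mem_ofPred_eq] using
          measure_prodMk_mem_eq_lintegral_of_indepFun hX hY hXY h_meas
    _ = ∫⁻ ω, ENNReal.ofReal (1 - Real.exp (-(r / c) * X ω)) ∂P := by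
        refine lintegral_congr_ae ?_
        filter_upwards [hX₀] with ω hω
        rw [expMeasure_Iic hr (div_nonneg hω hc.le)]
        ring_nf
    _ = ENNReal.ofReal (∫ ω, 1 - Real.exp (-(r / c) * X ω) ∂P) := by
        refine (ofReal_integral_eq_lintegral_ofReal ((integrable_const 1).sub h_int) ?_).symm
        filter_upwards [hX₀] with ω hω
        simpa using mul_nonneg (div_pos hr hc).le hω
    _ = ENNReal.ofReal (1 - mgf X P (-(r / c))) := by
        rw [integral_sub (integrable_const 1) h_int]
        simp [mgf]

variable {ι : Type*} {ξ : ι → Ω → ℝ}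

lemma mgf_sum_of_hasLaw_expMeasure {t : ℝ} (hr : 0 < r) (ht : t < r)
    (hξ : ∀ j, HasLaw (ξ j) (expMeasure r) P) (hindep : iIndepFun ξ P) (s : Finset ι) :
    mgf (∑ j ∈ s, ξ j) P t = (r / (r - t)) ^ s.card := by
  rw [hindep.mgf_sum₀ fun j ↦ (hξ j).aemeasurable]
  exact Finset.prod_eq_pow_card fun j _ ↦ mgf_of_hasLaw_expMeasure hr ht (hξ j)

lemma measure_mul_le_sum_of_hasLaw_expMeasure {c : ℝ} {s : Finset ι} {i : ι} (hr : 0 < r)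
    (hc : 0 < c) (hξ : ∀ j, HasLaw (ξ j) (expMeasure r) P) (hindep : iIndepFun ξ P) (hi : i ∉ s) :
    P {ω | c * ξ i ω ≤ ∑ j ∈ s, ξ j ω} = ENNReal.ofReal (1 - (c / (c + 1)) ^ s.card) := by
  have h_meas (j : ι) : AEMeasurable (ξ j) P := (hξ j).aemeasurable
  have h_nonneg : ∀ᵐ ω ∂P, 0 ≤ (∑ j ∈ s, ξ j) ω := by
    filter_upwards [(Finset.eventually_all s).mpr fun j _ ↦ ae_pos_of_hasLaw_expMeasure hr (hξ j)]
      with ω hω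
    simpa using Finset.sum_nonneg fun j hj ↦ (hω j hj).le
  have h_rate : -(r / c) < r := by linarith [div_pos hr hc]
  have h_ratio : r / (r - -(r / c)) = c / (c + 1) := by
    rw [sub_neg_eq_add]
    field_simp
  have h_prob := measure_mul_le_eq_one_sub_mgf hr hc (Finset.aemeasurable_sum s fun j _ ↦ h_meas j)
    h_nonneg (hξ i) (hindep.indepFun_finsetSum_of_notMem₀ h_meas hi)
  simpa only [Finset.sum_apply, mgf_sum_of_hasLaw_expMeasure hr h_rate hξ hindep, h_ratio]
    using h_prob

end

/-- The normalized log-value at `1` of the polynomial with coefficients `x₀, …, x_n`, as a function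
of the coefficient sequence; the paper's `X_n` is `normalizedLogValue (ξ · ω) n`. At `n = 0` the
factor `(n²)⁻¹` takes the junk value `0`. -/
noncomputable def normalizedLogValue (x : ℕ → ℝ) (n : ℕ) : ℝ :=
  ((n : ℝ) ^ 2)⁻¹ * Real.log ((∑ j ∈ Finset.range (n + 1), x j) / x n)

lemma normalizedLogValue_nonneg {x : ℕ → ℝ} (hx : ∀ j, 0 < x j) (n : ℕ) :
    0 ≤ normalizedLogValue x n := by
  refine mul_nonneg (by positivity) (Real.log_nonneg ?_)
  rw [one_le_div (hx n)]
  exact Finset.single_le_sum (fun j _ ↦ (hx j).le) (Finset.self_mem_range_succ n)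

lemma le_normalizedLogValue_iff {x : ℕ → ℝ} {n : ℕ} {B : ℝ} (hx : ∀ j, 0 < x j) (hn : n ≠ 0) :
    B ≤ normalizedLogValue x n ↔
      (Real.exp (B * (n : ℝ) ^ 2) - 1) * x n ≤ ∑ j ∈ Finset.range n, x j := by
  have h_sum : 0 < ∑ j ∈ Finset.range (n + 1), x j := Finset.sum_pos (fun j _ ↦ hx j) (by simp)
  rw [normalizedLogValue, le_inv_mul_iff₀' (by positivity),
    Real.le_log_iff_exp_le (div_pos h_sum (hx n)), le_div_iff₀ (hx n), Finset.sum_range_succ,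
    sub_one_mul, sub_le_iff_le_add]

lemma measure_le_normalizedLogValue {Ω : Type*} [MeasurableSpace Ω] {P : Measure Ω}
    {ξ : ℕ → Ω → ℝ} {r B : ℝ} {n : ℕ} (hr : 0 < r) (hξ : ∀ j, HasLaw (ξ j) (expMeasure r) P)
    (hindep : iIndepFun ξ P) (hn : n ≠ 0) (hB : 0 < B) :
    P {ω | B ≤ normalizedLogValue (ξ · ω) n} =
      ENNReal.ofReal (1 - (1 - Real.exp (-B * (n : ℝ) ^ 2)) ^ n) := by
  have h_pos : ∀ᵐ ω ∂P, ∀ j, 0 < ξ j ω :=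
    ae_all_iff.mpr fun j ↦ ae_pos_of_hasLaw_expMeasure hr (hξ j)
  have h_exp : 0 < Real.exp (B * (n : ℝ) ^ 2) - 1 := by
    rw [sub_pos, Real.one_lt_exp_iff]
    positivity
  have h_ratio : (Real.exp (B * (n : ℝ) ^ 2) - 1) / (Real.exp (B * (n : ℝ) ^ 2) - 1 + 1) =
      1 - Real.exp (-B * (n : ℝ) ^ 2) := by
    rw [sub_add_cancel, neg_mul, Real.exp_neg]
    field_simp
  calc P {ω | B ≤ normalizedLogValue (ξ · ω) n}
      = P {ω | (Real.exp (B * (n : ℝ) ^ 2) - 1) * ξ n ω ≤ ∑ j ∈ Finset.range n, ξ j ω} := by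
        refine measure_congr ?_
        filter_upwards [h_pos] with ω hω using propext (le_normalizedLogValue_iff hω hn)
    _ = ENNReal.ofReal (1 - (1 - Real.exp (-B * (n : ℝ) ^ 2)) ^ n) := by
        rw [measure_mul_le_sum_of_hasLaw_expMeasure hr h_exp hξ hindep Finset.notMem_range_self,
          h_ratio, Finset.card_range]

theorem Xn_tail_bound_general {Ω : Type*} [MeasurableSpace Ω] {P : Measure Ω} {ξ : ℕ → Ω → ℝ}
    {r : ℝ} {n : ℕ} (hr : 0 < r) (hξ : ∀ j, HasLaw (ξ j) (expMeasure r) P)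
    (hindep : iIndepFun ξ P) (hn : n ≠ 0) :
    (∀ B : ℝ, 0 < B → P {ω | B ≤ |normalizedLogValue (ξ · ω) n|} ≤
      ENNReal.ofReal (n * Real.exp (-B * (n : ℝ) ^ 2))) ∧
    ∀ᵐ ω ∂P, 0 ≤ normalizedLogValue (ξ · ω) n := by
  have h_nonneg : ∀ᵐ ω ∂P, 0 ≤ normalizedLogValue (ξ · ω) n := by
    filter_upwards [ae_all_iff.mpr fun j ↦ ae_pos_of_hasLaw_expMeasure hr (hξ j)] with ω hω
      using normalizedLogValue_nonneg hω n
  refine ⟨fun B hB ↦ ?_, h_nonneg⟩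
  calc P {ω | B ≤ |normalizedLogValue (ξ · ω) n|}
      = P {ω | B ≤ normalizedLogValue (ξ · ω) n} := by
        refine measure_congr ?_
        filter_upwards [h_nonneg] with ω hω
        exact congrArg (B ≤ ·) (abs_of_nonneg hω)
    _ = ENNReal.ofReal (1 - (1 - Real.exp (-B * (n : ℝ) ^ 2)) ^ n) :=
        measure_le_normalizedLogValue hr hξ hindep hn hB
    _ ≤ ENNReal.ofReal (n * Real.exp (-B * (n : ℝ) ^ 2)) := by
        refine ENNReal.ofReal_le_ofReal (one_sub_one_sub_pow_le ?_ n)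
        have : Real.exp (-B * (n : ℝ) ^ 2) ≤ 1 := by
          rw [Real.exp_le_one_iff, neg_mul, neg_nonpos]
          positivity
        linarith

/-- Tail bound for the normalized log-value at `1`: with
`X_n = (1/n²) log((ξ₀ + … + ξ_n)/ξ_n)` for i.i.d. exponential(1) coefficients
`ξ_j`, for every `B > 0` one has `P(|X_n| > B) ≤ 20 n e^{-B n²}` for all large `n`,
and `P(X_n ≤ -1) = 0` for all large `n`. -/
theorem Xn_tail_bound
    {Ω : Type*} [MeasurableSpace Ω] (P : Measure Ω) [IsProbabilityMeasure P]
    (ξ : ℕ → Ω → ℝ) (hmeas : ∀ j, Measurable (ξ j))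
    (hindep : iIndepFun ξ P)
    (hdist : ∀ j, Measure.map (ξ j) P = ProbabilityTheory.expMeasure 1) :
    (∀ B : ℝ, 0 < B → ∃ n₀ : ℕ, ∀ n ≥ n₀,
      P {ω | B <
          |(((n : ℝ) ^ 2)⁻¹ *
            Real.log ((∑ j ∈ Finset.range (n + 1), ξ j ω) / ξ n ω))|} ≤
        ENNReal.ofReal (20 * n * Real.exp (-B * (n : ℝ) ^ 2))) ∧
    ∃ n₁ : ℕ, ∀ n ≥ n₁,
      P {ω | (((n : ℝ) ^ 2)⁻¹ *
          Real.log ((∑ j ∈ Finset.range (n + 1), ξ j ω) / ξ n ω)) ≤ -1} = 0 := by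
  have hξ (j : ℕ) : HasLaw (ξ j) (expMeasure 1) P := ⟨(hmeas j).aemeasurable, hdist j⟩
  refine ⟨fun B hB ↦ ⟨1, fun n hn ↦ ?_⟩, 1, fun n hn ↦ ?_⟩
  · have h_tail := (Xn_tail_bound_general one_pos hξ hindep (Nat.one_le_iff_ne_zero.mp hn)).1 B hB
    refine (measure_mono fun ω (hω : B < _) ↦ hω.le).trans (h_tail.trans ?_)
    gcongr
    linarith [n.cast_nonneg (α := ℝ)]
  · have h_nonneg := (Xn_tail_bound_general one_pos hξ hindep (Nat.one_le_iff_ne_zero.mp hn)).2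
    refine measure_eq_zero_iff_ae_notMem.mpr (h_nonneg.mono fun ω hω ↦ ?_)
    exact not_le.mpr (neg_one_lt_zero.trans_le hω)
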